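/- arXiv:2409.01566 — 5 statements merged into one kernel-verified Lean document; each statement's English description precedes it below -/
import Mathlib

section
/- Let λ > 0, 0 < d_x ≤ λ/2 and 0 < d_y ≤ λ/2, and let D = {(α,β) ∈ [0,π]² : (λα/(2πd_x))² + (λβ/(2πd_y))² ≤ 1} be the feasible region. Define R : [0,π]² → ℝ by R(α,β) = 0 if (α,β) ∈ D and R(α,β) = 1 otherwise. Then the 2D Lebesgue measure of D equals π³ d_x d_y / λ², and consequently 1 − (1/π²) ∫₀^π ∫₀^π |R(α,β)|² dα dβ = π d_x d_y / λ². -/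
open Real MeasureTheory Classical

/-!
In terms of the semi-axes `a = 2π dx / λ` and `b = 2π dy / λ`, the feasible region is the quarter
of the ellipse `(α/a)² + (β/b)² ≤ 1` in the first quadrant; the spacing bounds say exactly that
`a, b ≤ π`, so the quarter ellipse is not cut off by the square `[0,π]²` and its area is `π a b / 4`.
Up to the single point `β = 0`, its slice at `α ∈ [0,π]` is `(0, h α]` with
`h α = b √(1 - (α/a)²)` (`le_ellipseHeight_iff`), and `∫₀^π h = π a b / 4` (`integral_ellipseHeight`).
Integrating the slice lengths gives the measure of `D`, and integrating `π - h α`, the length of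
the complementary slice, gives the double integral of `|R|²`.
-/

/-- Height over `x` of the upper half of the ellipse with semi-axes `a` and `b`. For `|x| > a` the
convention that `√` vanishes on negative numbers makes it `0`, the length of the empty slice. -/
noncomputable def ellipseHeight (a b x : ℝ) : ℝ := b * √(1 - (x / a) ^ 2)

lemma continuous_ellipseHeight (a b : ℝ) : Continuous (ellipseHeight a b) := by
  unfold ellipseHeight
  fun_prop

lemma ellipseHeight_nonneg {b : ℝ} (hb : 0 < b) (a x : ℝ) : 0 ≤ ellipseHeight a b x :=
  mul_nonneg hb.le (Real.sqrt_nonneg _)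

lemma ellipseHeight_le {b : ℝ} (hb : 0 < b) (a x : ℝ) : ellipseHeight a b x ≤ b := by
  unfold ellipseHeight
  have h : √(1 - (x / a) ^ 2) ≤ 1 := by
    rw [Real.sqrt_le_one]
    nlinarith [sq_nonneg (x / a)]
  nlinarith

/-- For `y > 0` this holds for every `x`; at `y = 0` it would fail when `|x| > a`. -/
lemma le_ellipseHeight_iff {b : ℝ} (hb : 0 < b) (a x : ℝ) {y : ℝ} (hy : 0 < y) :
    y ≤ ellipseHeight a b x ↔ (x / a) ^ 2 + (y / b) ^ 2 ≤ 1 := by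
  unfold ellipseHeight
  rw [mul_comm, ← div_le_iff₀ hb, Real.le_sqrt' (by positivity)]
  constructor <;> intro h <;> linarith

lemma integral_sqrt_one_sub_sq_zero_one : ∫ x in (0 : ℝ)..1, √(1 - x ^ 2) = π / 4 := by
  have hint : ∀ u v : ℝ, IntervalIntegrable (fun x : ℝ => √(1 - x ^ 2)) volume u v :=
    fun u v => Continuous.intervalIntegrable (by fun_prop) u v
  have h1 := integral_sqrt_one_sub_sq
  rw [← intervalIntegral.integral_add_adjacent_intervals (hint (-1) 0) (hint 0 1)] at h1
  have h2 := intervalIntegral.integral_comp_neg (a := 0) (b := 1) (fun x : ℝ => √(1 - x ^ 2))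
  simp only [neg_sq, neg_zero] at h2
  linarith

lemma integral_ellipseHeight {a b c : ℝ} (ha : 0 < a) (hac : a ≤ c) :
    ∫ x in (0 : ℝ)..c, ellipseHeight a b x = π * a * b / 4 := by
  have hint := fun u v => (continuous_ellipseHeight a b).intervalIntegrable (μ := volume) u v
  rw [← intervalIntegral.integral_add_adjacent_intervals (hint 0 a) (hint a c)]
  have h1 : ∫ x in a..c, ellipseHeight a b x = 0 := by
    apply intervalIntegral.integral_zero_ae
    refine Filter.Eventually.of_forall fun x hx => ?_
    rw [Set.uIoc_of_le hac] at hx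
    unfold ellipseHeight
    rw [Real.sqrt_eq_zero_of_nonpos, mul_zero]
    have : 1 ≤ x / a := (one_le_div ha).2 hx.1.le
    nlinarith
  have h2 : ∫ x in (0 : ℝ)..a, ellipseHeight a b x = π * a * b / 4 := by
    unfold ellipseHeight
    rw [intervalIntegral.integral_const_mul,
      intervalIntegral.integral_comp_div (fun x : ℝ => √(1 - x ^ 2)) ha.ne', zero_div,
      div_self ha.ne', integral_sqrt_one_sub_sq_zero_one, smul_eq_mul]
    ring
  rw [h1, h2, add_zero]

/-- **Hannan limit for an infinite 2D array**: with spacings `0 < dx ≤ λ/2`,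
`0 < dy ≤ λ/2`, the feasible region
`D = {(α,β) ∈ [0,π]² : (λα/(2π dx))² + (λβ/(2π dy))² ≤ 1}` has Lebesgue measure
`π³ dx dy / λ²`, and for the reflection coefficient `R` vanishing on `D` and equal
to `1` elsewhere on `[0,π]²`, the efficiency `1 - (1/π²) ∬ |R|²` equals `π dx dy / λ²`. -/
theorem hannan_2d_limit
    (lam dx dy : ℝ) (hlam : 0 < lam)
    (hdx : 0 < dx) (hdx' : dx ≤ lam / 2) (hdy : 0 < dy) (hdy' : dy ≤ lam / 2)
    (D : Set (ℝ × ℝ))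
    (hD : D = {p : ℝ × ℝ | p.1 ∈ Set.Icc 0 π ∧ p.2 ∈ Set.Icc 0 π ∧
      (lam * p.1 / (2 * π * dx)) ^ 2 + (lam * p.2 / (2 * π * dy)) ^ 2 ≤ 1})
    (R : ℝ × ℝ → ℝ)
    (hR : ∀ p ∈ Set.Icc (0 : ℝ) π ×ˢ Set.Icc (0 : ℝ) π,
      R p = if p ∈ D then 0 else 1) :
    volume D = ENNReal.ofReal (π ^ 3 * dx * dy / lam ^ 2) ∧
    1 - (1 / π ^ 2) * ∫ α in (0 : ℝ)..π, ∫ β in (0 : ℝ)..π, |R (α, β)| ^ 2 =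
      π * dx * dy / lam ^ 2 := by
  set a := 2 * π * dx / lam with ha_def
  set b := 2 * π * dy / lam with hb_def
  have hpi := Real.pi_pos
  have ha : 0 < a := by positivity
  have hb : 0 < b := by positivity
  have haπ : a ≤ π := by
    rw [ha_def, div_le_iff₀ hlam]
    nlinarith
  have hbπ : b ≤ π := by
    rw [hb_def, div_le_iff₀ hlam]
    nlinarith
  have hx : ∀ x, lam * x / (2 * π * dx) = x / a := by
    intro x
    rw [ha_def]
    field_simp
  have hy : ∀ y, lam * y / (2 * π * dy) = y / b := by
    intro y
    rw [hb_def]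
    field_simp
  have harea : π * a * b / 4 = π ^ 3 * dx * dy / lam ^ 2 := by
    rw [ha_def, hb_def]
    field_simp
    ring
  simp only [hx, hy] at hD
  set h := ellipseHeight a b with h_def
  have hcont : Continuous h := continuous_ellipseHeight a b
  have h0 : ∀ x, 0 ≤ h x := ellipseHeight_nonneg hb a
  have hπ : ∀ x, h x ≤ π := fun x => (ellipseHeight_le hb a x).trans hbπ
  have hint : ∫ x in (0 : ℝ)..π, h x = π ^ 3 * dx * dy / lam ^ 2 :=
    (integral_ellipseHeight ha haπ).trans harea
  have hmem : ∀ x ∈ Set.Icc 0 π, ∀ y, 0 < y → ((x, y) ∈ D ↔ y ≤ h x) := by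
    intro x hxI y hy0
    rw [hD, h_def, le_ellipseHeight_iff hb a x hy0]
    refine ⟨fun H => H.2.2, fun H => ⟨hxI, ⟨hy0.le, ?_⟩, H⟩⟩
    exact ((le_ellipseHeight_iff hb a x hy0).2 H).trans (hπ x)
  constructor
  · have hclosed : IsClosed D := by
      rw [hD]
      exact (isClosed_Icc.preimage continuous_fst).inter
        ((isClosed_Icc.preimage continuous_snd).inter
          (isClosed_le (f := fun p : ℝ × ℝ => (p.1 / a) ^ 2 + (p.2 / b) ^ 2)
            (by fun_prop) continuous_const))
    have hslice : ∀ x, volume (Prod.mk x ⁻¹' D) =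
        (Set.Icc 0 π).indicator (fun x => ENNReal.ofReal (h x)) x := by
      intro x
      by_cases hxI : x ∈ Set.Icc 0 π
      · rw [Set.indicator_of_mem hxI, ← measure_sdiff_null (measure_singleton (0 : ℝ))]
        have : (Prod.mk x ⁻¹' D) \ {0} = Set.Ioc 0 (h x) := by
          ext y
          simp only [Set.mem_sdiff, Set.mem_preimage, Set.mem_singleton_iff, Set.mem_Ioc]
          constructor
          · rintro ⟨hyD, hy0⟩
            have hy0' : 0 < y := by
              have hyD' := hyD
              rw [hD] at hyD'
              exact lt_of_le_of_ne hyD'.2.1.1 (Ne.symm hy0)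
            exact ⟨hy0', (hmem x hxI y hy0').1 hyD⟩
          · rintro ⟨hy0, hyh⟩
            exact ⟨(hmem x hxI y hy0).2 hyh, hy0.ne'⟩
        rw [this, Real.volume_Ioc, sub_zero]
      · rw [Set.indicator_of_notMem hxI]
        have : Prod.mk x ⁻¹' D = ∅ := by
          ext y
          simp only [Set.mem_preimage, Set.mem_empty_iff_false, iff_false]
          rw [hD]
          exact fun H => hxI H.1
        rw [this, measure_empty]
    rw [Measure.volume_eq_prod, Measure.prod_apply hclosed.measurableSet]
    simp only [hslice]
    rw [lintegral_indicator measurableSet_Icc,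
      ← ofReal_integral_eq_lintegral_ofReal hcont.continuousOn.integrableOn_Icc
        (Filter.Eventually.of_forall h0),
      integral_Icc_eq_integral_Ioc, ← intervalIntegral.integral_of_le hpi.le, hint]
  · have hinner : ∀ x ∈ Set.Icc 0 π, ∫ y in (0 : ℝ)..π, |R (x, y)| ^ 2 = π - h x := by
      intro x hxI
      have hRval : ∀ y ∈ Set.Ioc 0 π,
          |R (x, y)| ^ 2 = (Set.Ioc (h x) π).indicator (fun _ => (1 : ℝ)) y := by
        intro y hyI
        rw [hR (x, y) ⟨hxI, hyI.1.le, hyI.2⟩]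
        by_cases hyh : y ≤ h x
        · rw [if_pos ((hmem x hxI y hyI.1).2 hyh),
            Set.indicator_of_notMem (fun H => absurd H.1 hyh.not_gt)]
          simp
        · rw [if_neg (fun H => hyh ((hmem x hxI y hyI.1).1 H)),
            Set.indicator_of_mem (Set.mem_Ioc.2 ⟨not_le.1 hyh, hyI.2⟩)]
          simp
      rw [intervalIntegral.integral_of_le hpi.le,
        setIntegral_congr_fun measurableSet_Ioc hRval,
        setIntegral_indicator measurableSet_Ioc,
        Set.inter_eq_self_of_subset_right (Set.Ioc_subset_Ioc_left (h0 x)),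
        ← intervalIntegral.integral_of_le (hπ x)]
      simp
    have houter : ∫ x in (0 : ℝ)..π, ∫ y in (0 : ℝ)..π, |R (x, y)| ^ 2 =
        π ^ 2 - π ^ 3 * dx * dy / lam ^ 2 := by
      rw [intervalIntegral.integral_congr (g := fun x => π - h x)
          (fun x hx => hinner x (by rwa [Set.uIcc_of_le hpi.le] at hx)),
        intervalIntegral.integral_sub intervalIntegrable_const (hcont.intervalIntegrable 0 π),
        hint, intervalIntegral.integral_const, smul_eq_mul]
      ring
    rw [houter]
    field_simp
    ring
end

section
/- Let C⁰, C¹ : ℤ × ℤ → ℂ be summable families, and for γ ∈ ℝ define R_γ(α,β) = Σ_{(p,q)∈ℤ²} ( C⁰(p,q) + C¹(p,q) e^{iγ} ) · e^{i(pα+qβ)}. Then (1/2) · [ (1/(2π)²) ∫_{−π}^{π} ∫_{−π}^{π} |R_0(α,β)|² dα dβ + (1/(2π)²) ∫_{−π}^{π} ∫_{−π}^{π} |R_π(α,β)|² dα dβ ] = Σ_{(p,q)∈ℤ²} ( |C⁰(p,q)|² + |C¹(p,q)|² ). Consequently the embedded element efficiency η = 1 − Σ_{p,q}(|C⁰(p,q)|²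 + |C¹(p,q)|²) equals 1 − (1/2)·[average of the two squared-norm integrals]. -/
/-!
The average over the two phases `γ = 0` and `γ = π` is a parallelogram identity combined with
Parseval. For `γ = 0` and `γ = π` the Fourier coefficients of `R γ` are `C0 + C1` and `C0 - C1`,
so Parseval on the square `[-π, π]²` evaluates the two mean energies as `Σ ‖C0 ± C1‖²`, and the
parallelogram law turns their half-sum into `Σ (‖C0‖² + ‖C1‖²)`.

Since the coefficients are absolutely summable, Parseval needs no `L²` theory: `‖Σ A i e i‖²`
expands into the double series `Σ A i conj (A j) e i conj (e j)`, which converges absolutely and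
uniformly, and integrating it termwise leaves the diagonal by orthogonality
(`parseval_of_summable`).
-/

open Complex Real MeasureTheory

open scoped ComplexConjugate

/-- Parseval's identity for an absolutely convergent series in a countable orthogonal system of
continuous unimodular functions on a finite measure space, `c` being their common squared norm. -/
lemma parseval_of_summable {X ι : Type*} [TopologicalSpace X] [SecondCountableTopology X]
    [MeasurableSpace X] [BorelSpace X] [Countable ι] [DecidableEq ι]
    (μ : Measure X) [IsFiniteMeasure μ] (e : ι → X → ℂ) (he : ∀ i, Continuous (e i))
    (hn : ∀ i x, ‖e i x‖ = 1) (c : ℝ)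
    (ho : ∀ i j, ∫ x, e i x * conj (e j x) ∂μ = if i = j then (c : ℂ) else 0)
    (A : ι → ℂ) (hA : Summable A) :
    Integrable (fun x => ‖∑' i, A i * e i x‖ ^ 2) μ ∧
      ∫ x, ‖∑' i, A i * e i x‖ ^ 2 ∂μ = c * ∑' i, ‖A i‖ ^ 2 := by
  have hA' : Summable fun i => ‖A i‖ := hA.norm
  have hterm : ∀ i x, ‖A i * e i x‖ = ‖A i‖ := fun i x => by rw [norm_mul, hn, mul_one]
  have hcont : Continuous fun x => ∑' i, A i * e i x :=
    continuous_tsum (fun i => continuous_const.mul (he i)) hA' fun i x => (hterm i x).le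
  have hs : ∀ x, Summable fun i => ‖A i * e i x‖ := fun x => by simpa only [hterm] using hA'
  have hbound : ∀ x, ‖∑' i, A i * e i x‖ ≤ ∑' i, ‖A i‖ := fun x => by
    simpa only [hterm] using norm_tsum_le_tsum_norm (hs x)
  refine ⟨Integrable.of_bound (hcont.norm.pow 2).aestronglyMeasurable ((∑' i, ‖A i‖) ^ 2)
    (Filter.Eventually.of_forall fun x => ?_), ?_⟩
  · rw [Real.norm_of_nonneg (by positivity)]
    exact pow_le_pow_left₀ (norm_nonneg _) (hbound x) 2
  let F : ι × ι → X → ℂ := fun p x => (A p.1 * e p.1 x) * conj (A p.2 * e p.2 x)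
  have hFn : ∀ p x, ‖F p x‖ = ‖A p.1‖ * ‖A p.2‖ := fun p x => by
    simp only [F, norm_mul, RCLike.norm_conj, hn, mul_one]
  have hprod : Summable fun p : ι × ι => ‖A p.1‖ * ‖A p.2‖ :=
    hA'.mul_of_nonneg hA' (fun _ => norm_nonneg _) fun _ => norm_nonneg _
  have hFc : ∀ p, Continuous (F p) := fun p =>
    (continuous_const.mul (he _)).mul
      (Complex.continuous_conj.comp (continuous_const.mul (he _)))
  have hFi : ∀ p, Integrable (F p) μ := fun p =>
    Integrable.of_bound (hFc p).aestronglyMeasurable (‖A p.1‖ * ‖A p.2‖)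
      (Filter.Eventually.of_forall fun x => (hFn p x).le)
  have hsum := hasSum_integral_of_summable_integral_norm hFi (by
    simp only [hFn, integral_const, smul_eq_mul]
    exact hprod.mul_left _)
  have hexpand : ∀ x, ∑' p, F p x = ((‖∑' i, A i * e i x‖ ^ 2 : ℝ) : ℂ) := fun x => by
    have hconj : Summable fun i => ‖conj (A i * e i x)‖ := by
      simpa only [RCLike.norm_conj] using hs x
    rw [Complex.ofReal_pow, ← Complex.mul_conj', Complex.conj_tsum,
      tsum_mul_tsum_of_summable_norm (hs x) hconj]
  have hFint : ∀ p, ∫ x, F p x ∂μ = if p.1 = p.2 then (c : ℂ) * (‖A p.1‖ : ℂ) ^ 2 else 0 := by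
    rintro ⟨i, j⟩
    have : ∀ x, F (i, j) x = (A i * conj (A j)) * (e i x * conj (e j x)) := fun x => by
      simp only [F, map_mul]; ring
    simp only [this, integral_const_mul, ho]
    split_ifs with h
    · subst h; rw [Complex.mul_conj', mul_comm]
    · simp
  simp only [hexpand, hFint, integral_complex_ofReal] at hsum
  -- only the diagonal of the double series survives
  have hdiag := (Function.Injective.hasSum_iff (f := fun p : ι × ι =>
      if p.1 = p.2 then (c : ℂ) * (‖A p.1‖ : ℂ) ^ 2 else 0) (g := fun i : ι => (i, i))
      (fun i j h => (Prod.mk.inj h).1) (by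
        rintro ⟨i, j⟩ hp
        refine if_neg fun h => hp ⟨i, ?_⟩
        exact Prod.ext rfl h)).mpr hsum
  simp only [Function.comp_def, if_true] at hdiag
  rw [← tsum_mul_left]
  have hreal : HasSum (fun i => c * ‖A i‖ ^ 2) (∫ x, ‖∑' i, A i * e i x‖ ^ 2 ∂μ) := by
    rw [← Complex.hasSum_ofReal]
    simpa using hdiag
  exact hreal.tsum_eq.symm

lemma integral_exp_int_mul (n : ℤ) :
    ∫ x in (-π)..π, Complex.exp (Complex.I * ((n : ℂ) * (x : ℂ))) =
      if n = 0 then ((2 * π : ℝ) : ℂ) else 0 := by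
  split_ifs with h
  · subst h
    simp [two_mul]
  · have hc : Complex.I * (n : ℂ) ≠ 0 := mul_ne_zero Complex.I_ne_zero (by exact_mod_cast h)
    simp only [← mul_assoc]
    rw [integral_exp_mul_complex hc, div_eq_zero_iff, sub_eq_zero]
    left
    rw [Complex.exp_eq_exp_iff_exists_int]
    exact ⟨n, by push_cast; ring⟩

/-- Parseval's identity on `[-π, π]²` for an absolutely convergent double Fourier series. -/
lemma parseval_square (A : ℤ × ℤ → ℂ) (hA : Summable A) :
    ∫ α in (-π)..π, ∫ β in (-π)..π, ‖∑' pq : ℤ × ℤ, A pq *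
      Complex.exp (Complex.I * ((pq.1 : ℂ) * (α : ℂ) + (pq.2 : ℂ) * (β : ℂ)))‖ ^ 2 =
      (2 * π) ^ 2 * ∑' pq, ‖A pq‖ ^ 2 := by
  have hle : -π ≤ π := by linarith [Real.pi_pos]
  let ν : Measure ℝ := volume.restrict (Set.Ioc (-π) π)
  obtain ⟨hint, heq⟩ := parseval_of_summable (ν.prod ν)
    (fun (pq : ℤ × ℤ) (x : ℝ × ℝ) =>
      Complex.exp (Complex.I * ((pq.1 : ℂ) * (x.1 : ℂ) + (pq.2 : ℂ) * (x.2 : ℂ))))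
    (fun pq => by fun_prop)
    (fun pq x => by
      have : Complex.I * ((pq.1 : ℂ) * (x.1 : ℂ) + (pq.2 : ℂ) * (x.2 : ℂ)) =
        ((pq.1 * x.1 + pq.2 * x.2 : ℝ) : ℂ) * Complex.I := by push_cast; ring
      rw [this, Complex.norm_exp_ofReal_mul_I])
    ((2 * π) ^ 2)
    (fun i j => by
      have hfac : ∀ x : ℝ × ℝ,
          Complex.exp (Complex.I * ((i.1 : ℂ) * (x.1 : ℂ) + (i.2 : ℂ) * (x.2 : ℂ))) *
            conj (Complex.exp (Complex.I * ((j.1 : ℂ) * (x.1 : ℂ) + (j.2 : ℂ) * (x.2 : ℂ)))) =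
          Complex.exp (Complex.I * (((i.1 - j.1 : ℤ) : ℂ) * (x.1 : ℂ))) *
            Complex.exp (Complex.I * (((i.2 - j.2 : ℤ) : ℂ) * (x.2 : ℂ))) := fun x => by
        rw [← Complex.exp_conj, ← Complex.exp_add, ← Complex.exp_add]
        congr 1
        simp only [map_mul, map_add, Complex.conj_I, Complex.conj_ofReal, map_intCast]
        push_cast
        ring
      simp only [hfac]
      rw [integral_prod_mul (μ := ν) (ν := ν)
        (fun a : ℝ => Complex.exp (Complex.I * (((i.1 - j.1 : ℤ) : ℂ) * (a : ℂ))))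
        (fun b : ℝ => Complex.exp (Complex.I * (((i.2 - j.2 : ℤ) : ℂ) * (b : ℂ)))),
        ← intervalIntegral.integral_of_le hle, ← intervalIntegral.integral_of_le hle,
        integral_exp_int_mul, integral_exp_int_mul]
      simp only [sub_eq_zero, Prod.ext_iff]
      by_cases h1 : i.1 = j.1 <;> by_cases h2 : i.2 = j.2 <;> simp [h1, h2, sq])
    A hA
  rw [← heq, integral_prod _ hint]
  simp only [intervalIntegral.integral_of_le hle]
  rfl

/-- **Theorem 2** (embedded element efficiency of a two-layer infinite 3D array):
averaging the reflected energy `(1/(2π)²) ∬ |R_γ|²` over the inter-layer phase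
settings `γ = 0` and `γ = π` recovers `Σ (|C⁰|² + |C¹|²)`, and consequently the
embedded element efficiency `η = 1 − Σ (|C⁰|² + |C¹|²)` equals one minus that
average. -/
theorem two_layer_3d_efficiency
    (C0 C1 : ℤ × ℤ → ℂ) (hsum0 : Summable C0) (hsum1 : Summable C1)
    (R : ℝ → ℝ → ℝ → ℂ)
    (hR : ∀ γ α β : ℝ, R γ α β =
      ∑' pq : ℤ × ℤ,
        (C0 pq + C1 pq * Complex.exp (Complex.I * (γ : ℂ))) *
          Complex.exp (Complex.I * ((pq.1 : ℂ) * (α : ℂ) + (pq.2 : ℂ) * (β : ℂ)))) :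
    (1 / 2 : ℝ) *
      ((1 / (2 * π) ^ 2) * (∫ α in (-π)..π, ∫ β in (-π)..π, ‖R 0 α β‖ ^ 2) +
       (1 / (2 * π) ^ 2) * (∫ α in (-π)..π, ∫ β in (-π)..π, ‖R π α β‖ ^ 2)) =
      (∑' pq : ℤ × ℤ, (‖C0 pq‖ ^ 2 + ‖C1 pq‖ ^ 2)) ∧
    (1 - ∑' pq : ℤ × ℤ, (‖C0 pq‖ ^ 2 + ‖C1 pq‖ ^ 2)) =
      1 - (1 / 2 : ℝ) *
        ((1 / (2 * π) ^ 2) * (∫ α in (-π)..π, ∫ β in (-π)..π, ‖R 0 α β‖ ^ 2) +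
         (1 / (2 * π) ^ 2) * (∫ α in (-π)..π, ∫ β in (-π)..π, ‖R π α β‖ ^ 2)) := by
  have hsq : ∀ A : ℤ × ℤ → ℂ, Summable A → Summable fun pq => ‖A pq‖ ^ 2 := fun A hA =>
    hA.norm.of_norm_bounded_eventually (by
      filter_upwards [hA.norm.tendsto_cofinite_zero.eventually_le_const one_pos] with pq h
      rw [Real.norm_of_nonneg (by positivity)]
      nlinarith [norm_nonneg (A pq)])
  have h0 : ∫ α in (-π)..π, ∫ β in (-π)..π, ‖R 0 α β‖ ^ 2 =
      (2 * π) ^ 2 * ∑' pq, ‖C0 pq + C1 pq‖ ^ 2 := by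
    rw [← parseval_square _ (hsum0.add hsum1)]
    simp [hR]
  have hπ : ∫ α in (-π)..π, ∫ β in (-π)..π, ‖R π α β‖ ^ 2 =
      (2 * π) ^ 2 * ∑' pq, ‖C0 pq - C1 pq‖ ^ 2 := by
    rw [← parseval_square _ (hsum0.sub hsum1)]
    simp [hR, mul_comm Complex.I (π : ℂ), Complex.exp_pi_mul_I, sub_eq_add_neg]
  have main : (1 / 2 : ℝ) *
      ((1 / (2 * π) ^ 2) * (∫ α in (-π)..π, ∫ β in (-π)..π, ‖R 0 α β‖ ^ 2) +
       (1 / (2 * π) ^ 2) * (∫ α in (-π)..π, ∫ β in (-π)..π, ‖R π α β‖ ^ 2)) =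
      ∑' pq : ℤ × ℤ, (‖C0 pq‖ ^ 2 + ‖C1 pq‖ ^ 2) := by
    have hc : ((2 * π) ^ 2 : ℝ) ≠ 0 := by positivity
    rw [h0, hπ, ← mul_assoc, ← mul_assoc, one_div_mul_cancel hc, one_mul, one_mul,
      ← (hsq _ (hsum0.add hsum1)).tsum_add (hsq _ (hsum0.sub hsum1)), ← tsum_mul_left]
    refine tsum_congr fun pq => ?_
    have := parallelogram_law_with_norm ℂ (C0 pq) (C1 pq)
    linarith
  exact ⟨main, by rw [main]⟩
end

section
/- Let M, N be positive integers and C⁰, C¹ : {0,…,M−1} × {0,…,N−1} → ℂ. For γ ∈ ℝ define the sampled reflection coefficients 𝓡_γ(m,n) = Σ_{p=0}^{M−1} Σ_{q=0}^{N−1} ( C⁰_{pq} + C¹_{pq} e^{iγ} ) · exp(−2πi·(mp/M + nq/N)). Then Σ_{p,q} ( |C⁰_{pq}|² + |C¹_{pq}|² ) = (1/(2MN)) · [ Σ_{m=0}^{M−1} Σ_{n=0}^{N−1} |𝓡_0(m,n)|² + Σ_{m=0}^{M−1} Σ_{n=0}^{N−1} |𝓡_π(m,n)|² ]; consequently the efficiency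 η = 1 − Σ_{p,q}(|C⁰_{pq}|² + |C¹_{pq}|²) equals (1/2 − Σ_{m,n}|𝓡_0(m,n)|²/(2MN)) + (1/2 − Σ_{m,n}|𝓡_π(m,n)|²/(2MN)). -/
open Complex Real

/-!
The unnormalised discrete Fourier transform on `Fin M` multiplies the squared `ℓ²` norm by `M`
(`dft_parseval`), because the characters `m ↦ exp (-2πi m p / M)` are orthogonal, with squared
norm `M` (`dft_orthogonality`). Applying this in each variable gives the two-dimensional version
`dft_parseval₂`, with factor `M * N`. At `γ = 0` and `γ = π` the transformed arrays are `C⁰ + C¹`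
and `C⁰ - C¹`, so the parallelogram law removes the cross terms and accounts for the factor `2`.
-/

theorem dft_orthogonality (M : ℕ) (hM : 0 < M) (p q : Fin M) :
    ∑ m : Fin M, Complex.exp (-(2 * Real.pi * Complex.I) * (((m : ℕ) : ℂ) * ((p : ℕ) : ℂ) / M)) *
      (starRingEnd ℂ)
        (Complex.exp (-(2 * Real.pi * Complex.I) * (((m : ℕ) : ℂ) * ((q : ℕ) : ℂ) / M))) =
      if p = q then (M : ℂ) else 0 := by
  have hM0 : (M : ℂ) ≠ 0 := by exact_mod_cast hM.ne'
  set z : ℂ := Complex.exp (2 * Real.pi * Complex.I * ((((q : ℕ) : ℂ) - ((p : ℕ) : ℂ)) / M))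
    with hz
  have hterm : ∀ m : Fin M,
      Complex.exp (-(2 * Real.pi * Complex.I) * (((m : ℕ) : ℂ) * ((p : ℕ) : ℂ) / M)) *
      (starRingEnd ℂ)
        (Complex.exp (-(2 * Real.pi * Complex.I) * (((m : ℕ) : ℂ) * ((q : ℕ) : ℂ) / M))) =
      z ^ (m : ℕ) := by
    intro m
    rw [hz, ← Complex.exp_nat_mul, ← Complex.exp_conj, ← Complex.exp_add]
    congr 1
    simp only [map_mul, map_neg, map_div₀, Complex.conj_I, Complex.conj_ofReal, map_natCast,
      map_ofNat]
    ring
  rw [Finset.sum_congr rfl fun m _ => hterm m, Fin.sum_univ_eq_sum_range (fun k => z ^ k) M]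
  split_ifs with h
  · subst h
    simp [hz]
  · have hz1 : z ≠ 1 := by
      intro h1
      rw [hz, Complex.exp_eq_one_iff] at h1
      obtain ⟨k, hk⟩ := h1
      have h2 : (((q : ℕ) : ℂ) - ((p : ℕ) : ℂ)) / M = k := by
        apply mul_left_cancel₀ Complex.two_pi_I_ne_zero
        rw [hk]; ring
      rw [div_eq_iff hM0] at h2
      have h3 : ((q : ℕ) : ℤ) - ((p : ℕ) : ℤ) = k * M := by exact_mod_cast h2
      -- `|q - p| < M`, so the only multiple of `M` it can be is `0`.
      have h4 : ((q : ℕ) : ℤ) - ((p : ℕ) : ℤ) = 0 := by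
        apply Int.eq_zero_of_abs_lt_dvd (m := (M : ℤ)) ⟨k, by rw [h3]; ring⟩
        have := p.isLt
        have := q.isLt
        rw [abs_lt]; omega
      apply h
      ext
      omega
    have hzM : z ^ M = 1 := by
      rw [hz, ← Complex.exp_nat_mul, Complex.exp_eq_one_iff]
      refine ⟨((q : ℕ) : ℤ) - ((p : ℕ) : ℤ), ?_⟩
      push_cast
      field_simp
    rw [geom_sum_eq hz1, hzM]
    simp

theorem dft_parseval (M : ℕ) (hM : 0 < M) (a : Fin M → ℂ) :
    ∑ m : Fin M, ‖∑ p : Fin M, a p *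
      Complex.exp (-(2 * Real.pi * Complex.I) * (((m : ℕ) : ℂ) * ((p : ℕ) : ℂ) / M))‖ ^ 2 =
      M * ∑ p, ‖a p‖ ^ 2 := by
  apply Complex.ofReal_injective
  push_cast
  simp only [← Complex.mul_conj', map_sum, Finset.sum_mul_sum]
  rw [Finset.sum_comm, Finset.mul_sum]
  refine Finset.sum_congr rfl fun p _ => ?_
  rw [Finset.sum_comm]
  have key : ∀ q : Fin M, ∑ m : Fin M,
      a p * Complex.exp (-(2 * Real.pi * Complex.I) * (((m : ℕ) : ℂ) * ((p : ℕ) : ℂ) / M)) *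
      (starRingEnd ℂ) (a q *
        Complex.exp (-(2 * Real.pi * Complex.I) * (((m : ℕ) : ℂ) * ((q : ℕ) : ℂ) / M))) =
      a p * (starRingEnd ℂ) (a q) * if p = q then (M : ℂ) else 0 := by
    intro q
    rw [← dft_orthogonality M hM p q, Finset.mul_sum]
    refine Finset.sum_congr rfl fun m _ => ?_
    rw [map_mul]
    ring
  rw [Finset.sum_congr rfl fun q _ => key q]
  simp only [mul_ite, mul_zero, Finset.sum_ite_eq, Finset.mem_univ, if_true]
  ring

theorem dft_parseval₂ (M N : ℕ) (hM : 0 < M) (hN : 0 < N) (a : Fin M → Fin N → ℂ) :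
    ∑ m : Fin M, ∑ n : Fin N, ‖∑ p, ∑ q, a p q *
      Complex.exp (-(2 * Real.pi * Complex.I) *
        (((m : ℕ) : ℂ) * ((p : ℕ) : ℂ) / (M : ℂ) + ((n : ℕ) : ℂ) * ((q : ℕ) : ℂ) / (N : ℂ)))‖ ^ 2 =
      M * N * ∑ p, ∑ q, ‖a p q‖ ^ 2 := by
  -- The kernel factors, so the double sum is a transform in `q` followed by one in `p`.
  have hsplit : ∀ (m : Fin M) (n : Fin N), (∑ p, ∑ q, a p q *
      Complex.exp (-(2 * Real.pi * Complex.I) *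
        (((m : ℕ) : ℂ) * ((p : ℕ) : ℂ) / (M : ℂ) + ((n : ℕ) : ℂ) * ((q : ℕ) : ℂ) / (N : ℂ)))) =
      ∑ p, (∑ q, a p q *
        Complex.exp (-(2 * Real.pi * Complex.I) * (((n : ℕ) : ℂ) * ((q : ℕ) : ℂ) / N))) *
        Complex.exp (-(2 * Real.pi * Complex.I) * (((m : ℕ) : ℂ) * ((p : ℕ) : ℂ) / M)) := by
    intro m n
    refine Finset.sum_congr rfl fun p _ => ?_
    rw [Finset.sum_mul]
    refine Finset.sum_congr rfl fun q _ => ?_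
    rw [mul_add, Complex.exp_add]
    ring
  simp only [hsplit]
  rw [Finset.sum_comm]
  simp only [dft_parseval M hM]
  rw [← Finset.mul_sum, Finset.sum_comm]
  simp only [dft_parseval N hN]
  rw [← Finset.mul_sum, mul_assoc]

/-- **Equation (26)** (finite two-layer 3D array efficiency): with intra- and
inter-layer coupling coefficients `C⁰, C¹` and sampled reflection coefficients
`𝓡_γ(m,n) = Σ_{p,q} (C⁰ + C¹ e^{iγ}) exp(-2πi(mp/M + nq/N))`, the Parseval
identity `Σ (|C⁰|² + |C¹|²) = (Σ|𝓡_0|² + Σ|𝓡_π|²)/(2MN)` holds, and consequently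
the efficiency `1 − Σ (|C⁰|² + |C¹|²)` equals
`(1/2 − Σ|𝓡_0|²/(2MN)) + (1/2 − Σ|𝓡_π|²/(2MN))`. -/
theorem finite_two_layer_3d_efficiency
    (M N : ℕ) (hM : 0 < M) (hN : 0 < N)
    (C0 C1 : Fin M → Fin N → ℂ) (𝓡 : ℝ → Fin M → Fin N → ℂ)
    (h𝓡 : ∀ (γ : ℝ) (m : Fin M) (n : Fin N), 𝓡 γ m n =
      ∑ p, ∑ q, (C0 p q + C1 p q * Complex.exp (Complex.I * (γ : ℂ))) *
        Complex.exp (-(2 * Real.pi * Complex.I) *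
          (((m : ℕ) : ℂ) * ((p : ℕ) : ℂ) / (M : ℂ) + ((n : ℕ) : ℂ) * ((q : ℕ) : ℂ) / (N : ℂ)))) :
    (∑ p, ∑ q, (‖C0 p q‖ ^ 2 + ‖C1 p q‖ ^ 2)) =
      (1 / (2 * (M : ℝ) * (N : ℝ))) *
        ((∑ m, ∑ n, ‖𝓡 0 m n‖ ^ 2) + (∑ m, ∑ n, ‖𝓡 π m n‖ ^ 2)) ∧
    (1 - ∑ p, ∑ q, (‖C0 p q‖ ^ 2 + ‖C1 p q‖ ^ 2)) =
      ((1 / 2 : ℝ) - (∑ m, ∑ n, ‖𝓡 0 m n‖ ^ 2) / (2 * (M : ℝ) * (N : ℝ))) +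
      ((1 / 2 : ℝ) - (∑ m, ∑ n, ‖𝓡 π m n‖ ^ 2) / (2 * (M : ℝ) * (N : ℝ))) := by
  have h0 : ∑ m, ∑ n, ‖𝓡 0 m n‖ ^ 2 = M * N * ∑ p, ∑ q, ‖C0 p q + C1 p q‖ ^ 2 := by
    rw [← dft_parseval₂ M N hM hN]
    simp [h𝓡]
  have hπ : ∑ m, ∑ n, ‖𝓡 π m n‖ ^ 2 = M * N * ∑ p, ∑ q, ‖C0 p q - C1 p q‖ ^ 2 := by
    rw [← dft_parseval₂ M N hM hN]
    have he : Complex.exp (Complex.I * (π : ℂ)) = -1 := by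
      rw [mul_comm, Complex.exp_pi_mul_I]
    simp only [h𝓡, he, mul_neg, mul_one, ← sub_eq_add_neg]
  have hpar : (∑ p, ∑ q, ‖C0 p q + C1 p q‖ ^ 2) + (∑ p, ∑ q, ‖C0 p q - C1 p q‖ ^ 2) =
      2 * ∑ p, ∑ q, (‖C0 p q‖ ^ 2 + ‖C1 p q‖ ^ 2) := by
    simp only [← Finset.sum_add_distrib, Finset.mul_sum]
    refine Finset.sum_congr rfl fun p _ => Finset.sum_congr rfl fun q _ => ?_
    have := parallelogram_law_with_norm ℝ (C0 p q) (C1 p q)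
    linarith
  have hM0 : (M : ℝ) ≠ 0 := by exact_mod_cast hM.ne'
  have hN0 : (N : ℝ) ≠ 0 := by exact_mod_cast hN.ne'
  have hmain : (∑ p, ∑ q, (‖C0 p q‖ ^ 2 + ‖C1 p q‖ ^ 2)) =
      (1 / (2 * (M : ℝ) * (N : ℝ))) *
        ((∑ m, ∑ n, ‖𝓡 0 m n‖ ^ 2) + (∑ m, ∑ n, ‖𝓡 π m n‖ ^ 2)) := by
    rw [h0, hπ, ← mul_add, hpar]
    field_simp
  refine ⟨hmain, ?_⟩
  rw [hmain]
  ring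
end

section
/- Let A_xy > 0 and A_xz, A_yz be real numbers. Then ( ∫_{0}^{π/2} ∫_{0}^{π/2} (A_xy cos θ + A_xz sin φ sin θ + A_yz cos φ sin θ) sin θ dθ dφ ) / ( ∫_{0}^{π/2} ∫_{0}^{π/2} A_xy cos θ sin θ dθ dφ ) = 1 + (A_xz + A_yz)/A_xy. -/
open Real

/-!
The integrand is `Axy * (cos θ * sin θ) + (Axz * sin φ + Ayz * cos φ) * sin θ ^ 2`. Over `[0, π/2]`,
`cos θ * sin θ` integrates to `1/2` and `sin θ ^ 2` to `π/4`, while `sin φ` and `cos φ` integrate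
to `1`. So the numerator is `π/4 * (Axy + Axz + Ayz)` and the denominator is `π/4 * Axy`.
-/

lemma integral_cos_mul_sin_quarter :
    ∫ θ in (0 : ℝ)..(π / 2), Real.cos θ * Real.sin θ = 1 / 2 := by
  simp_rw [mul_comm (Real.cos _)]
  simp [integral_sin_mul_cos₁]

lemma integral_sin_sq_quarter :
    ∫ θ in (0 : ℝ)..(π / 2), Real.sin θ ^ 2 = π / 4 := by
  rw [integral_sin_sq]
  simp
  ring

lemma integral_effective_area_elevation (a c : ℝ) :
    ∫ θ in (0 : ℝ)..(π / 2), (a * (Real.cos θ * Real.sin θ) + c * Real.sin θ ^ 2) =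
      a * (1 / 2) + c * (π / 4) := by
  rw [intervalIntegral.integral_add
      ((by fun_prop : Continuous _).intervalIntegrable _ _)
      ((by fun_prop : Continuous _).intervalIntegrable _ _),
    intervalIntegral.integral_const_mul, intervalIntegral.integral_const_mul,
    integral_cos_mul_sin_quarter, integral_sin_sq_quarter]

lemma integral_effective_area_azimuth (k a b : ℝ) :
    ∫ φ in (0 : ℝ)..(π / 2), (k + (a * Real.sin φ + b * Real.cos φ)) =
      k * (π / 2) + (a + b) := by
  rw [intervalIntegral.integral_add
      ((by fun_prop : Continuous _).intervalIntegrable _ _)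
      ((by fun_prop : Continuous _).intervalIntegrable _ _),
    intervalIntegral.integral_add
      ((by fun_prop : Continuous _).intervalIntegrable _ _)
      ((by fun_prop : Continuous _).intervalIntegrable _ _),
    intervalIntegral.integral_const_mul, intervalIntegral.integral_const_mul,
    integral_sin, integral_cos]
  simp
  ring

/-- **Half-space average gain of a 3D array**: for the observation region
`0 ≤ θ ≤ π/2`, `0 ≤ φ ≤ π/2`, the average gain of the 3D array normalized to a 2D
array of the same planar aperture `A_xy` equals `1 + (A_xz + A_yz)/A_xy`. -/
theorem half_space_average_gain_3d
    (Axy Axz Ayz : ℝ) (hAxy : 0 < Axy) :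
    (∫ φ in (0 : ℝ)..(π / 2), ∫ θ in (0 : ℝ)..(π / 2),
        (Axy * Real.cos θ + Axz * Real.sin φ * Real.sin θ +
          Ayz * Real.cos φ * Real.sin θ) * Real.sin θ) /
      (∫ φ in (0 : ℝ)..(π / 2), ∫ θ in (0 : ℝ)..(π / 2),
        Axy * Real.cos θ * Real.sin θ) =
    1 + (Axz + Ayz) / Axy := by
  have hnum : ∀ φ : ℝ, (∫ θ in (0 : ℝ)..(π / 2),
      (Axy * Real.cos θ + Axz * Real.sin φ * Real.sin θ +
        Ayz * Real.cos φ * Real.sin θ) * Real.sin θ) =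
      Axy * (1 / 2) + (Axz * (π / 4) * Real.sin φ + Ayz * (π / 4) * Real.cos φ) := by
    intro φ
    have h := integral_effective_area_elevation Axy (Axz * Real.sin φ + Ayz * Real.cos φ)
    calc _ = _ := by
          congr 1
          ext θ
          ring
      _ = _ := h
      _ = _ := by ring
  have hden : (∫ θ in (0 : ℝ)..(π / 2), Axy * Real.cos θ * Real.sin θ) = Axy * (1 / 2) := by
    simp_rw [mul_assoc]
    rw [intervalIntegral.integral_const_mul, integral_cos_mul_sin_quarter]
  simp_rw [hnum, hden]
  rw [integral_effective_area_azimuth, intervalIntegral.integral_const, smul_eq_mul]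
  have hpi := Real.pi_ne_zero
  have hA := hAxy.ne'
  field_simp
  ring
end

section
/- Let λ > 0, 0 < d ≤ λ/2, 0 < t ≤ 2, ξ ∈ [0, π/2]; set B = 2πd/λ and A = arccos((t²−2)/2), and define r₋ = √(B² − [min(B cos ξ + A, B)]²) and r₊ = √(B² − [max(B cos ξ − A, 0)]²). Then the feasible set { (α,β) : α ≥ 0, β ≥ 0, α² + β² ≤ B², and 2 + 2·cos( B·(cos ξ − √(1 − (α²+β²)/B²)) ) ≥ t² } equals the quarter annulus { (α,β) : α ≥ 0, β ≥ 0, r₋² ≤ α² + β² ≤ r₊² }. -/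
/-!
Put `c = B cos ξ` and `h = B √(1 - s / B²)` with `s = α² + β²`, so that `h ≥ 0` and `h² = B² - s`.
The phase mismatch is `c - h`, and since `c, h ∈ [0, B]` and `d ≤ λ / 2` gives `B ≤ π`, we have
`|c - h| ≤ π`. As cosine is strictly decreasing on `[0, π]`, the amplitude condition amounts to
`|c - h| ≤ A`, that is `c - A ≤ h ≤ c + A` (`amplitude_iff`). Because `h ∈ [0, B]`, this is the same
as `max (c - A) 0 ≤ h ≤ min (c + A) B`; squaring and substituting `h² = B² - s` yields the two
radii.
-/

open Real

/-- The amplitude threshold bounds the phase mismatch, as long as the mismatch stays within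
`[-π, π]`. -/
lemma amplitude_iff {t φ : ℝ} (ht : 0 < t) (ht2 : t ≤ 2) (hφ : |φ| ≤ π) :
    t ^ 2 ≤ 2 + 2 * Real.cos φ ↔ |φ| ≤ Real.arccos ((t ^ 2 - 2) / 2) := by
  have h1 : Real.cos (Real.arccos ((t ^ 2 - 2) / 2)) = (t ^ 2 - 2) / 2 :=
    Real.cos_arccos (by nlinarith) (by nlinarith)
  rw [← Real.strictAntiOn_cos.le_iff_ge (a := Real.arccos ((t ^ 2 - 2) / 2)) (b := |φ|)
    ⟨Real.arccos_nonneg _, Real.arccos_le_pi _⟩ ⟨abs_nonneg _, hφ⟩, h1, Real.cos_abs]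
  constructor <;> intro h <;> linarith

/-- **Theorem 3, radii characterization**: the planar feasible region of a
two-layer infinite 3D uniform array with equal spacings `d_x = d_y = d_z = d`
at wavelength `λ`, for in-phase angle `ξ` and amplitude threshold `t`, is the
quarter annulus with radii `r₋ = √(B² − min(B cos ξ + A, B)²)` and
`r₊ = √(B² − max(B cos ξ − A, 0)²)`, where `B = 2πd/λ`, `A = arccos((t²−2)/2)`. -/
theorem feasible_region_quarter_annulus
    (lam d t ξ : ℝ) (hlam : 0 < lam) (hd : 0 < d) (hd' : d ≤ lam / 2)
    (ht : 0 < t) (ht2 : t ≤ 2) (hξ : ξ ∈ Set.Icc 0 (π / 2))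
    (B A rm rp : ℝ)
    (hB : B = 2 * π * d / lam)
    (hA : A = Real.arccos ((t ^ 2 - 2) / 2))
    (hrm : rm = Real.sqrt (B ^ 2 - (min (B * Real.cos ξ + A) B) ^ 2))
    (hrp : rp = Real.sqrt (B ^ 2 - (max (B * Real.cos ξ - A) 0) ^ 2)) :
    {p : ℝ × ℝ | 0 ≤ p.1 ∧ 0 ≤ p.2 ∧ p.1 ^ 2 + p.2 ^ 2 ≤ B ^ 2 ∧
        t ^ 2 ≤ 2 + 2 * Real.cos (B * (Real.cos ξ -
          Real.sqrt (1 - (p.1 ^ 2 + p.2 ^ 2) / B ^ 2)))} =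
    {p : ℝ × ℝ | 0 ≤ p.1 ∧ 0 ≤ p.2 ∧
        rm ^ 2 ≤ p.1 ^ 2 + p.2 ^ 2 ∧ p.1 ^ 2 + p.2 ^ 2 ≤ rp ^ 2} := by
  have hB0 : 0 < B := by rw [hB]; positivity
  have hBpi : B ≤ π := by
    rw [hB, div_le_iff₀ hlam]
    nlinarith [Real.pi_pos]
  have hA0 : 0 ≤ A := hA ▸ Real.arccos_nonneg _
  have hc0 : 0 ≤ B * Real.cos ξ :=
    mul_nonneg hB0.le (Real.cos_nonneg_of_mem_Icc ⟨by linarith [hξ.1, Real.pi_pos], hξ.2⟩)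
  have hcB : B * Real.cos ξ ≤ B := mul_le_of_le_one_right hB0.le (Real.cos_le_one ξ)
  have hm0 : 0 ≤ min (B * Real.cos ξ + A) B := le_min (by linarith) hB0.le
  have hM0 : 0 ≤ max (B * Real.cos ξ - A) 0 := le_max_right _ _
  have hMB : max (B * Real.cos ξ - A) 0 ≤ B := max_le (by linarith) hB0.le
  have hrm2 : rm ^ 2 = B ^ 2 - (min (B * Real.cos ξ + A) B) ^ 2 := by
    rw [hrm, Real.sq_sqrt (sub_nonneg.2 (pow_le_pow_left₀ hm0 (min_le_right _ _) 2))]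
  have hrp2 : rp ^ 2 = B ^ 2 - (max (B * Real.cos ξ - A) 0) ^ 2 := by
    rw [hrp, Real.sq_sqrt (sub_nonneg.2 (pow_le_pow_left₀ hM0 hMB 2))]
  ext ⟨a, b⟩
  simp only [Set.mem_ofPred_eq]
  refine and_congr_right fun _ => and_congr_right fun _ => ?_
  have hs0 : 0 ≤ a ^ 2 + b ^ 2 := by positivity
  generalize a ^ 2 + b ^ 2 = s at hs0 ⊢
  have key : s ≤ B ^ 2 → (t ^ 2 ≤ 2 + 2 * Real.cos (B * (Real.cos ξ - √(1 - s / B ^ 2))) ↔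
      rm ^ 2 ≤ s ∧ s ≤ rp ^ 2) := by
    intro hs
    have hh0 : 0 ≤ B * √(1 - s / B ^ 2) := by positivity
    have hh2 : (B * √(1 - s / B ^ 2)) ^ 2 = B ^ 2 - s := by
      rw [mul_pow, Real.sq_sqrt (sub_nonneg.2 ((div_le_one (by positivity)).2 hs))]
      field_simp
    rw [mul_sub]
    generalize B * √(1 - s / B ^ 2) = h at hh0 hh2 ⊢
    have hhB : h ≤ B := abs_le_of_sq_le_sq' (by linarith) hB0.le |>.2
    rw [amplitude_iff ht ht2 (abs_le.2 ⟨by linarith, by linarith⟩), ← hA, hrm2, hrp2]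
    have e1 : B ^ 2 - (min (B * Real.cos ξ + A) B) ^ 2 ≤ s ↔ h ≤ min (B * Real.cos ξ + A) B := by
      rw [← pow_le_pow_iff_left₀ hh0 hm0 two_ne_zero, hh2]
      constructor <;> intro _ <;> linarith
    have e2 : s ≤ B ^ 2 - (max (B * Real.cos ξ - A) 0) ^ 2 ↔ max (B * Real.cos ξ - A) 0 ≤ h := by
      rw [← pow_le_pow_iff_left₀ hM0 hh0 two_ne_zero, hh2]
      constructor <;> intro _ <;> linarith
    rw [e1, e2, le_min_iff, max_le_iff, abs_le]
    constructor
    · rintro ⟨_, _⟩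
      exact ⟨⟨by linarith, hhB⟩, by linarith, hh0⟩
    · rintro ⟨⟨_, _⟩, _, _⟩
      exact ⟨by linarith, by linarith⟩
  constructor
  · rintro ⟨hs, hcos⟩
    exact (key hs).1 hcos
  · intro hr
    -- The outer radius never exceeds `B`, so annulus points satisfy the visibility constraint.
    have hs : s ≤ B ^ 2 := by nlinarith [hr.2, hrp2, sq_nonneg (max (B * Real.cos ξ - A) 0)]
    exact ⟨hs, (key hs).2 hr⟩
end
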